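/- Let r ∈ (1,2] and ψ_r : ℝ → ℝ be defined by ψ_r(x) = |x|^r. Then for all real x and y, |ψ_r'(x) - ψ_r'(y)| ≤ r * 2^(2-r) * |x - y|^(r-1), where ψ_r'(x) = r * |x|^(r-1) * sign(x). -/

import Mathlib

theorem Real.rpow_add_rpow_le_two_rpow_mul {p a b : ℝ} (hp0 : 0 ≤ p) (hp1 : p ≤ 1)
    (ha : 0 ≤ a) (hb : 0 ≤ b) : a ^ p + b ^ p ≤ 2 ^ (1 - p) * (a + b) ^ p := by
  have h := (Real.concaveOn_rpow hp0 hp1).2 (Set.mem_Ici.2 ha) (Set.mem_Ici.2 hb)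
    (by norm_num : (0 : ℝ) ≤ 1 / 2) (by norm_num : (0 : ℝ) ≤ 1 / 2) (by norm_num)
  simp only [smul_eq_mul] at h
  rw [← mul_add, ← mul_add, Real.mul_rpow (by norm_num) (add_nonneg ha hb),
    Real.div_rpow zero_le_one zero_le_two, Real.one_rpow] at h
  rw [Real.rpow_sub zero_lt_two, Real.rpow_one]
  calc a ^ p + b ^ p = 2 * (1 / 2 * (a ^ p + b ^ p)) := by ring
    _ ≤ 2 * (1 / 2 ^ p * (a + b) ^ p) := by gcongr
    _ = 2 / 2 ^ p * (a + b) ^ p := by ring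

theorem Real.abs_rpow_sub_rpow_le {p a b : ℝ} (hp0 : 0 ≤ p) (hp1 : p ≤ 1)
    (ha : 0 ≤ a) (hb : 0 ≤ b) : |a ^ p - b ^ p| ≤ |a - b| ^ p := by
  wlog hab : b ≤ a generalizing a b
  · rw [abs_sub_comm, abs_sub_comm a b]
    exact this hb ha (le_of_not_ge hab)
  have hmono := Real.rpow_le_rpow hb hab hp0
  have h := Real.rpow_add_le_add_rpow (sub_nonneg.2 hab) hb hp0 hp1
  rw [sub_add_cancel] at h
  rw [abs_of_nonneg (sub_nonneg.2 hmono), abs_of_nonneg (sub_nonneg.2 hab)]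
  linarith

theorem Real.abs_rpow_mul_sign_of_nonneg {p x : ℝ} (hp : p ≠ 0) (hx : 0 ≤ x) :
    |x| ^ p * Real.sign x = x ^ p := by
  rcases hx.eq_or_lt with rfl | hx
  · simp [Real.zero_rpow hp]
  · rw [Real.sign_of_pos hx, abs_of_pos hx, mul_one]

theorem Real.abs_rpow_mul_sign_of_nonpos {p x : ℝ} (hp : p ≠ 0) (hx : x ≤ 0) :
    |x| ^ p * Real.sign x = -(-x) ^ p := by
  rw [← Real.abs_rpow_mul_sign_of_nonneg hp (neg_nonneg.2 hx), Real.sign_neg, abs_neg]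
  ring

theorem Real.abs_abs_rpow_mul_sign_sub_le {p : ℝ} (hp0 : 0 < p) (hp1 : p ≤ 1) (x y : ℝ) :
    |(|x| ^ p * Real.sign x) - |y| ^ p * Real.sign y| ≤ 2 ^ (1 - p) * |x - y| ^ p := by
  have hconst : (1 : ℝ) ≤ 2 ^ (1 - p) :=
    Real.one_le_rpow one_le_two (sub_nonneg.2 hp1)
  have hbound : |x - y| ^ p ≤ 2 ^ (1 - p) * |x - y| ^ p :=
    le_mul_of_one_le_left (by positivity) hconst
  wlog hxy : y ≤ x generalizing x y
  · rw [abs_sub_comm, abs_sub_comm x y]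
    exact this y x (by rwa [abs_sub_comm]) (le_of_not_ge hxy)
  rcases le_total 0 y with hy | hy
  · rw [Real.abs_rpow_mul_sign_of_nonneg hp0.ne' (hy.trans hxy),
      Real.abs_rpow_mul_sign_of_nonneg hp0.ne' hy]
    exact (Real.abs_rpow_sub_rpow_le hp0.le hp1 (hy.trans hxy) hy).trans hbound
  rw [Real.abs_rpow_mul_sign_of_nonpos hp0.ne' hy]
  have hy' := neg_nonneg.2 hy
  rcases le_total 0 x with hx | hx
  · rw [Real.abs_rpow_mul_sign_of_nonneg hp0.ne' hx, sub_neg_eq_add,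
      abs_of_nonneg (by positivity), abs_of_nonneg (sub_nonneg.2 hxy), sub_eq_add_neg x y]
    exact Real.rpow_add_rpow_le_two_rpow_mul hp0.le hp1 hx hy'
  · rw [Real.abs_rpow_mul_sign_of_nonpos hp0.ne' hx, neg_sub_neg]
    refine (Real.abs_rpow_sub_rpow_le hp0.le hp1 hy' (neg_nonneg.2 hx)).trans ?_
    rwa [neg_sub_neg]

/-- for `r ∈ (1,2]` and `ψ_r(x) = |x|^r`, with derivative
`ψ_r'(x) = r |x|^(r-1) sign x`, one has `|ψ_r'(x) - ψ_r'(y)| ≤ r 2^(2-r) |x-y|^(r-1)`. -/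
theorem stmt1 (r : ℝ) (hr1 : 1 < r) (hr2 : r ≤ 2) (x y : ℝ) :
    |r * |x| ^ (r - 1) * Real.sign x - r * |y| ^ (r - 1) * Real.sign y| ≤
      r * 2 ^ (2 - r) * |x - y| ^ (r - 1) := by
  have h := Real.abs_abs_rpow_mul_sign_sub_le (sub_pos.2 hr1) (by linarith : r - 1 ≤ 1) x y
  rw [show 1 - (r - 1) = 2 - r by ring] at h
  have hr : 0 ≤ r := by linarith
  rw [mul_assoc, mul_assoc, mul_assoc, ← mul_sub, abs_mul, abs_of_nonneg hr]
  exact mul_le_mul_of_nonneg_left h hr
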